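/- The energy functional F attains its infimum on A: there exists φ ∈ A such that F(φ) ≤ F(u) for every u ∈ A, i.e. F(φ) = Λ₁. -/

import Mathlib

/-!
The direct method, with hidden convexity in place of a compact embedding. In terms of `w = u ^ 2`
the energy is convex: `[√w]_s^2` is convex in `w` (reverse triangle inequality in `ℝ²`), while
`w ↦ -∫ w ^ (q / 2)` is strictly convex because `q < 2`. Thus the quadratic mean
`√((u ^ 2 + v ^ 2) / 2)` of two nonnegative admissible functions has energy at most the average
of the two energies minus `α / q` times the integral of a pointwise concavity defect
(`EF_qmean_le`).

The fractional Poincaré inequality on the bounded set `Ω` gives coercivity (`coercive`), so `Λ₁`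
is finite and a minimizing sequence `u_n`, which may be taken nonnegative, is bounded in `L^q`.
The quadratic means of `u_n` and `u_m` have energy at least `Λ₁`, so the defects of the pairs
`(u_n, u_m)` tend to zero in `L^1`. The defect controls `|u_n - u_m| ^ q` up to a small multiple
of `u_n ^ q + u_m ^ q` (`abs_sub_rpow_le`), hence `u_n` is Cauchy in `L^q(Ω)`. Along a subsequence
it converges a.e. to its `L^q` limit `φ`; Fatou's lemma (`gagSq_le_liminf`) and the convergence of
the `L^q` terms give `F(φ) ≤ Λ₁`.
-/

open MeasureTheory ENNReal Filter

noncomputable section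

/-- Euclidean space `ℝ^N`. -/
abbrev E (N : ℕ) : Type := EuclideanSpace ℝ (Fin N)

/-- The squared Gagliardo seminorm `[u]_s^2`, valued in `[0,∞]`. -/
def gagSq (N : ℕ) (s : ℝ) (u : E N → ℝ) : ℝ≥0∞ :=
  ∫⁻ x : E N, ∫⁻ y : E N,
    ENNReal.ofReal ((u x - u y) ^ 2 / dist x y ^ ((N : ℝ) + 2 * s))

/-- The admissible class `A`: measurable functions vanishing a.e. outside `Ω`,
with finite Gagliardo seminorm and `|u|^q` integrable on `Ω`. -/
def memA (N : ℕ) (s q : ℝ) (Ω : Set (E N)) (u : E N → ℝ) : Prop :=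
  Measurable u ∧ (∀ᵐ x : E N, x ∉ Ω → u x = 0) ∧ gagSq N s u < ⊤ ∧
    IntegrableOn (fun x => |u x| ^ q) Ω

/-- The energy functional `F(u) = (1/2)[u]_s^2 − (α/q)∫_Ω |u|^q`. -/
def EF (N : ℕ) (s q α : ℝ) (Ω : Set (E N)) (u : E N → ℝ) : ℝ :=
  (1 / 2) * (gagSq N s u).toReal - (α / q) * ∫ x in Ω, |u x| ^ q

/-- The ground state level `Λ₁ = inf {F(u) : u ∈ A}`. -/
def Lam1 (N : ℕ) (s q α : ℝ) (Ω : Set (E N)) : ℝ :=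
  sInf {c : ℝ | ∃ u, memA N s q Ω u ∧ EF N s q α Ω u = c}

/-- A critical point of `F`: a weak solution of `(−Δ)^s u = α|u|^{q−2}u` in `Ω`. -/
def IsCritPt (N : ℕ) (s q α : ℝ) (Ω : Set (E N)) (u : E N → ℝ) : Prop :=
  memA N s q Ω u ∧ ∀ ψ : E N → ℝ, memA N s q Ω ψ →
    (∫ x : E N, ∫ y : E N,
        (u x - u y) * (ψ x - ψ y) / dist x y ^ ((N : ℝ) + 2 * s)) =
      α * ∫ x in Ω, |u x| ^ (q - 2) * u x * ψ x

/-- A critical value of `F`. -/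
def IsCritVal (N : ℕ) (s q α : ℝ) (Ω : Set (E N)) (c : ℝ) : Prop :=
  ∃ u, IsCritPt N s q α Ω u ∧ EF N s q α Ω u = c

/-- The first excited level `Λ₂ = inf {Λ > Λ₁ : Λ is a critical value of F}`. -/
def Lam2 (N : ℕ) (s q α : ℝ) (Ω : Set (E N)) : ℝ :=
  sInf {c : ℝ | Lam1 N s q α Ω < c ∧ IsCritVal N s q α Ω c}

/-- The cross term `I(u,v) = ∫∫ u(x)v(y)/|x−y|^{N+2s}` (valued in `[0,∞]`). -/
def crossI (N : ℕ) (s : ℝ) (u v : E N → ℝ) : ℝ≥0∞ :=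
  ∫⁻ x : E N, ∫⁻ y : E N,
    ENNReal.ofReal (u x * v y / dist x y ^ ((N : ℝ) + 2 * s))

/-- The metric of convergence in measure on `Ω`. -/
def d0 (N : ℕ) (Ω : Set (E N)) (u v : E N → ℝ) : ℝ :=
  ∫ x in Ω, min 1 |u x - v x|

/-- The power nonlinearity `Φ(t) = |t|^{m−1} t`. -/
def Phi (m t : ℝ) : ℝ := |t| ^ (m - 1) * t

/-- The nonlinearity `g(t) = |t|^{(m−1)/2} t`. -/
def gfun (m t : ℝ) : ℝ := |t| ^ ((m - 1) / 2) * t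

/-! ### The concavity defect -/

/-- The gap in the midpoint concavity inequality of `w ↦ w ^ (q / 2)` at `w = a ^ 2, b ^ 2`. -/
def defect (q a b : ℝ) : ℝ := (√((a ^ 2 + b ^ 2) / 2)) ^ q - (a ^ q + b ^ q) / 2

lemma defect_pos {q : ℝ} (hq : q ∈ Set.Ioo (1:ℝ) 2) {a b : ℝ} (ha : 0 ≤ a) (hb : 0 ≤ b)
    (hab : a ≠ b) : 0 < defect q a b := by
  have h := (Real.strictConcaveOn_rpow (p := q / 2) (by linarith [hq.1]) (by linarith [hq.2])).2
    (Set.mem_Ici.2 (sq_nonneg a)) (Set.mem_Ici.2 (sq_nonneg b))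
    (by rwa [Ne, sq_eq_sq₀ ha hb]) (by norm_num : (0:ℝ) < 1 / 2) (by norm_num : (0:ℝ) < 1 / 2) (by norm_num)
  have e : ∀ y : ℝ, 0 ≤ y → (y ^ 2) ^ (q / 2) = y ^ q := fun y hy => by
    rw [← Real.rpow_natCast, ← Real.rpow_mul hy]; congr 1; push_cast; ring
  have e2 : (√((a ^ 2 + b ^ 2) / 2)) ^ q = ((a ^ 2 + b ^ 2) / 2) ^ (q / 2) := by
    rw [← e _ (Real.sqrt_nonneg _), Real.sq_sqrt (by positivity)]
  simp only [smul_eq_mul] at h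
  rw [e a ha, e b hb] at h
  rw [defect, e2, show (a ^ 2 + b ^ 2) / 2 = 1 / 2 * a ^ 2 + 1 / 2 * b ^ 2 by ring]
  linarith

lemma defect_nonneg {q : ℝ} (hq : q ∈ Set.Ioo (1:ℝ) 2) {a b : ℝ} (ha : 0 ≤ a) (hb : 0 ≤ b) :
    0 ≤ defect q a b := by
  by_cases hab : a = b
  · subst hab
    rw [defect, show (a ^ 2 + a ^ 2) / 2 = a ^ 2 by ring, Real.sqrt_sq ha]; linarith
  · exact (defect_pos hq ha hb hab).le

lemma defect_comm (q a b : ℝ) : defect q a b = defect q b a := by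
  unfold defect; rw [add_comm (a ^ 2), add_comm (a ^ q)]

lemma defect_scale {q a t : ℝ} (ha : 0 ≤ a) (ht : 0 ≤ t) :
    defect q a (a * t) = a ^ q * defect q 1 t := by
  unfold defect
  rw [show (a ^ 2 + (a * t) ^ 2) / 2 = a ^ 2 * ((1 ^ 2 + t ^ 2) / 2) by ring,
    Real.sqrt_mul (by positivity), Real.sqrt_sq ha, Real.mul_rpow ha (Real.sqrt_nonneg _),
    Real.mul_rpow ha ht, Real.one_rpow]
  ring

/-- Quantitative strict concavity: the defect controls `|a - b| ^ q` up to an arbitrarily small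
multiple of `a ^ q + b ^ q`. By homogeneity and symmetry it suffices to treat `a = 1`,
`b ∈ [0, 1]`, where compactness applies. -/
lemma abs_sub_rpow_le {q : ℝ} (hq : q ∈ Set.Ioo (1:ℝ) 2) {ε : ℝ} (hε : 0 < ε) :
    ∃ C, 0 ≤ C ∧ ∀ a b : ℝ, 0 ≤ a → 0 ≤ b →
      |a - b| ^ q ≤ C * defect q a b + ε * (a ^ q + b ^ q) := by
  have hq0 : 0 < q := by linarith [hq.1]
  let K : Set ℝ := Set.Icc 0 1 ∩ {t | ε ≤ |1 - t| ^ q}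
  have hcont : Continuous fun t : ℝ => |1 - t| ^ q :=
    (by fun_prop : Continuous fun t : ℝ => |1 - t|).rpow_const fun _ => Or.inr hq0.le
  have hcd : Continuous fun t : ℝ => defect q 1 t := by
    unfold defect
    refine ((by fun_prop : Continuous fun t : ℝ => √((1 ^ 2 + t ^ 2) / 2)).rpow_const
      fun _ => Or.inr hq0.le).sub ?_
    exact (continuous_const.add (continuous_id.rpow_const fun _ => Or.inr hq0.le)).div_const _
  have hK : IsCompact K := isCompact_Icc.inter_right (isClosed_le continuous_const hcont)
  have hpos : ∀ t ∈ K, 0 < defect q 1 t := fun t ht => by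
    refine defect_pos hq zero_le_one ht.1.1 ?_
    rintro rfl
    have := ht.2
    simp only [Set.mem_ofPred_eq, sub_self, abs_zero, Real.zero_rpow hq0.ne'] at this
    linarith
  obtain ⟨C, hC⟩ := hK.exists_bound_of_continuousOn
    (f := fun t => |1 - t| ^ q / defect q 1 t)
    (hcont.continuousOn.div hcd.continuousOn fun t ht => (hpos t ht).ne')
  have key : ∀ t ∈ Set.Icc (0:ℝ) 1,
      |1 - t| ^ q ≤ max C 0 * defect q 1 t + ε * (1 + t ^ q) := by
    intro t ht
    have h1 : 0 ≤ t ^ q := Real.rpow_nonneg ht.1 _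
    have h2 := defect_nonneg hq zero_le_one ht.1
    by_cases hk : t ∈ K
    · have h := (le_abs_self _).trans (hC t hk)
      rw [div_le_iff₀ (hpos t hk)] at h
      have : C * defect q 1 t ≤ max C 0 * defect q 1 t :=
        mul_le_mul_of_nonneg_right (le_max_left _ _) h2
      have : 0 ≤ ε * (1 + t ^ q) := by positivity
      linarith
    · have h : |1 - t| ^ q < ε := by
        by_contra hcon
        exact hk ⟨ht, not_lt.1 hcon⟩
      have : 0 ≤ max C 0 * defect q 1 t := by positivity
      nlinarith
  have main : ∀ a b : ℝ, 0 ≤ b → b ≤ a →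
      |a - b| ^ q ≤ max C 0 * defect q a b + ε * (a ^ q + b ^ q) := by
    intro a b hb hab
    rcases (hb.trans hab).eq_or_lt with h0 | h0
    · have hb0 : b = 0 := by linarith
      subst hb0; subst h0
      simp [defect, Real.zero_rpow hq0.ne']
    · obtain ⟨t, rfl⟩ : ∃ t, b = a * t := ⟨b / a, by field_simp⟩
      have ht0 : 0 ≤ t := by by_contra h; nlinarith
      have ht1 : t ≤ 1 := by by_contra h; nlinarith
      rw [defect_scale h0.le ht0, Real.mul_rpow h0.le ht0,
        show a - a * t = a * (1 - t) by ring, abs_mul, abs_of_pos h0,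
        Real.mul_rpow h0.le (abs_nonneg _)]
      have := mul_le_mul_of_nonneg_left (key t ⟨ht0, ht1⟩) (Real.rpow_nonneg h0.le q)
      linarith
  refine ⟨max C 0, le_max_right _ _, fun a b ha hb => ?_⟩
  rcases le_total b a with h | h
  · exact main a b hb h
  · rw [abs_sub_comm, defect_comm, add_comm (a ^ q)]; exact main b a ha h

/-- Young-type inequality: since `q < 2`, any multiple of `|t| ^ q` is dominated by any positive
multiple of `t ^ 2` up to a constant. The threshold `T` solves `A * T ^ q = c * T ^ 2`. -/
lemma rpow_le_sq_add {q : ℝ} (hq : q ∈ Set.Ioo (1:ℝ) 2) {A c : ℝ} (hA : 0 < A) (hc : 0 < c) :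
    ∃ C, 0 ≤ C ∧ ∀ t : ℝ, A * |t| ^ q ≤ c * t ^ 2 + C := by
  have hq0 : 0 < q := by linarith [hq.1]
  set T : ℝ := (A / c) ^ (1 / (2 - q)) with hT
  have hTpos : 0 < T := by positivity
  refine ⟨A * T ^ q, by positivity, fun t => ?_⟩
  rcases le_total |t| T with h | h
  · have : |t| ^ q ≤ T ^ q := Real.rpow_le_rpow (abs_nonneg _) h hq0.le
    nlinarith [sq_nonneg t]
  · have ht : 0 < |t| := hTpos.trans_le h
    have h1 : A / c ≤ |t| ^ (2 - q) := by
      have := Real.rpow_le_rpow hTpos.le h (by linarith [hq.2] : 0 ≤ 2 - q)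
      rwa [hT, ← Real.rpow_mul (by positivity), one_div_mul_cancel (by linarith [hq.2]),
        Real.rpow_one] at this
    rw [div_le_iff₀ hc] at h1
    have h2 : |t| ^ (2 - q) * |t| ^ q = t ^ 2 := by
      rw [← Real.rpow_add ht, sub_add_cancel, Real.rpow_two, sq_abs]
    have h3 : 0 ≤ |t| ^ q := by positivity
    have : 0 ≤ A * T ^ q := by positivity
    nlinarith [mul_le_mul_of_nonneg_right h1 h3]

/-! ### Convexity along quadratic means -/

/-- The quadratic mean of `u` and `v`, i.e. the midpoint of `u ^ 2` and `v ^ 2` read in terms of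
the square root. -/
def qmean {N : ℕ} (u v : E N → ℝ) (x : E N) : ℝ := √((u x ^ 2 + v x ^ 2) / 2)

/-- Reverse triangle inequality in `ℝ²` for the vectors `(a, b)` and `(c, d)`. -/
lemma sqrt_mean_sub_sq_le (a b c d : ℝ) :
    (√((a ^ 2 + b ^ 2) / 2) - √((c ^ 2 + d ^ 2) / 2)) ^ 2 ≤
      1 / 2 * (a - c) ^ 2 + 1 / 2 * (b - d) ^ 2 := by
  have h1 : (0:ℝ) ≤ (a ^ 2 + b ^ 2) / 2 := by positivity
  have h2 : (0:ℝ) ≤ (c ^ 2 + d ^ 2) / 2 := by positivity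
  have h3 : (a * c + b * d) / 2 ≤ √((a ^ 2 + b ^ 2) / 2) * √((c ^ 2 + d ^ 2) / 2) := by
    rw [← Real.sqrt_mul h1]
    apply Real.le_sqrt_of_sq_le
    nlinarith [sq_nonneg (a * d - b * c)]
  nlinarith [Real.sq_sqrt h1, Real.sq_sqrt h2]

lemma measurable_gag {N : ℕ} (s : ℝ) {u : E N → ℝ} (hu : Measurable u) :
    Measurable fun z : E N × E N =>
      ENNReal.ofReal ((u z.1 - u z.2) ^ 2 / dist z.1 z.2 ^ ((N : ℝ) + 2 * s)) := by
  fun_prop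

lemma measurable_gag_right {N : ℕ} (s : ℝ) {u : E N → ℝ} (hu : Measurable u) (x : E N) :
    Measurable fun y : E N =>
      ENNReal.ofReal ((u x - u y) ^ 2 / dist x y ^ ((N : ℝ) + 2 * s)) := by
  fun_prop

lemma measurable_gag_inner {N : ℕ} (s : ℝ) {u : E N → ℝ} (hu : Measurable u) :
    Measurable fun x : E N => ∫⁻ y : E N,
      ENNReal.ofReal ((u x - u y) ^ 2 / dist x y ^ ((N : ℝ) + 2 * s)) :=
  (measurable_gag s hu).lintegral_prod_right'

lemma gagSq_qmean_le {N : ℕ} (s : ℝ) {u v : E N → ℝ} (hu : Measurable u) (hv : Measurable v) :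
    gagSq N s (qmean u v) ≤
      ENNReal.ofReal (1 / 2) * gagSq N s u + ENNReal.ofReal (1 / 2) * gagSq N s v := by
  have mu := measurable_gag_inner s hu
  have mv := measurable_gag_inner s hv
  have mu1 := measurable_gag_right s hu
  have mv1 := measurable_gag_right s hv
  unfold gagSq
  rw [← lintegral_const_mul _ mu,
    ← lintegral_const_mul _ mv,
    ← lintegral_add_left (mu.const_mul _)]
  refine lintegral_mono fun x => ?_
  rw [← lintegral_const_mul _ (mu1 x), ← lintegral_const_mul _ (mv1 x),
    ← lintegral_add_left ((mu1 x).const_mul _)]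
  refine lintegral_mono fun y => ?_
  have hd : 0 ≤ dist x y ^ ((N : ℝ) + 2 * s) := by positivity
  rw [← ENNReal.ofReal_mul (by norm_num), ← ENNReal.ofReal_mul (by norm_num),
    ← ENNReal.ofReal_add (by positivity) (by positivity)]
  apply ENNReal.ofReal_le_ofReal
  rw [← mul_div_assoc, ← mul_div_assoc, ← add_div]
  exact div_le_div_of_nonneg_right (sqrt_mean_sub_sq_le _ _ _ _) hd

lemma qmean_rpow_le {q a b : ℝ} (hq : 0 < q) :
    |√((a ^ 2 + b ^ 2) / 2)| ^ q ≤ |a| ^ q + |b| ^ q := by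
  have ha := Real.rpow_nonneg (abs_nonneg a) q
  have hb := Real.rpow_nonneg (abs_nonneg b) q
  rw [abs_of_nonneg (Real.sqrt_nonneg _)]
  rcases le_total |a| |b| with h | h
  · have : √((a ^ 2 + b ^ 2) / 2) ≤ |b| := by
      rw [← Real.sqrt_sq_eq_abs]
      exact Real.sqrt_le_sqrt (by linarith [sq_le_sq.2 h])
    linarith [Real.rpow_le_rpow (Real.sqrt_nonneg _) this hq.le]
  · have : √((a ^ 2 + b ^ 2) / 2) ≤ |a| := by
      rw [← Real.sqrt_sq_eq_abs]
      exact Real.sqrt_le_sqrt (by linarith [sq_le_sq.2 h])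
    linarith [Real.rpow_le_rpow (Real.sqrt_nonneg _) this hq.le]

lemma memA_qmean {N : ℕ} {s q : ℝ} {Ω : Set (E N)} (hq : 0 < q) {u v : E N → ℝ}
    (hu : memA N s q Ω u) (hv : memA N s q Ω v) : memA N s q Ω (qmean u v) := by
  have hm : Measurable (qmean u v) := by
    have := hu.1
    have := hv.1
    unfold qmean
    fun_prop
  refine ⟨hm, ?_, ?_, ?_⟩
  · filter_upwards [hu.2.1, hv.2.1] with x h1 h2 hx
    simp [qmean, h1 hx, h2 hx]
  · refine (gagSq_qmean_le s hu.1 hv.1).trans_lt ?_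
    exact ENNReal.add_lt_top.2 ⟨ENNReal.mul_lt_top ENNReal.ofReal_lt_top hu.2.2.1,
      ENNReal.mul_lt_top ENNReal.ofReal_lt_top hv.2.2.1⟩
  · refine (hu.2.2.2.add hv.2.2.2).mono'
      (hm.abs.pow_const q).aestronglyMeasurable (ae_of_all _ fun x => ?_)
    rw [Real.norm_of_nonneg (Real.rpow_nonneg (abs_nonneg _) _)]
    exact qmean_rpow_le hq

lemma gagSq_qmean_toReal_le {N : ℕ} {s q : ℝ} {Ω : Set (E N)} {u v : E N → ℝ}
    (hu : memA N s q Ω u) (hv : memA N s q Ω v) :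
    (gagSq N s (qmean u v)).toReal ≤
      ((gagSq N s u).toReal + (gagSq N s v).toReal) / 2 := by
  have h1 := ENNReal.mul_ne_top (ENNReal.ofReal_ne_top (r := 1 / 2)) hu.2.2.1.ne
  have h2 := ENNReal.mul_ne_top (ENNReal.ofReal_ne_top (r := 1 / 2)) hv.2.2.1.ne
  have h := ENNReal.toReal_mono (ENNReal.add_ne_top.2 ⟨h1, h2⟩) (gagSq_qmean_le s hu.1 hv.1)
  rw [ENNReal.toReal_add h1 h2, ENNReal.toReal_mul, ENNReal.toReal_mul,
    ENNReal.toReal_ofReal (by norm_num)] at h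
  linarith

lemma qmean_self {N : ℕ} (u : E N → ℝ) (x : E N) : qmean u u x = |u x| := by
  rw [qmean, ← Real.sqrt_sq_eq_abs]; congr 1; ring

/-- Replacing `u` by `|u|`, written as the quadratic mean of `u` with itself, does not increase
the energy. -/
lemma EF_qmean_self_le {N : ℕ} {s q α : ℝ} {Ω : Set (E N)} {u : E N → ℝ}
    (hu : memA N s q Ω u) : EF N s q α Ω (qmean u u) ≤ EF N s q α Ω u := by
  have h := gagSq_qmean_toReal_le hu hu
  simp only [EF, qmean_self, abs_abs]
  linarith

lemma defect_eq {N : ℕ} {q : ℝ} {u v : E N → ℝ} (hu0 : ∀ x, 0 ≤ u x) (hv0 : ∀ x, 0 ≤ v x)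
    (x : E N) : defect q (u x) (v x) =
      |qmean u v x| ^ q - 1 / 2 * |u x| ^ q - 1 / 2 * |v x| ^ q := by
  rw [abs_of_nonneg (hu0 x), abs_of_nonneg (hv0 x), defect, qmean,
    abs_of_nonneg (Real.sqrt_nonneg _)]
  ring

lemma integrableOn_defect {N : ℕ} {s q : ℝ} {Ω : Set (E N)} (hq : 0 < q) {u v : E N → ℝ}
    (hu : memA N s q Ω u) (hv : memA N s q Ω v) (hu0 : ∀ x, 0 ≤ u x) (hv0 : ∀ x, 0 ≤ v x) :
    IntegrableOn (fun x => defect q (u x) (v x)) Ω := by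
  simp only [defect_eq hu0 hv0]
  exact ((memA_qmean hq hu hv).2.2.2.sub (hu.2.2.2.const_mul _)).sub (hv.2.2.2.const_mul _)

/-- The energy is midpoint convex in `u ^ 2`, and the integrated defect measures the gain. -/
lemma EF_qmean_le {N : ℕ} {s q α : ℝ} {Ω : Set (E N)} (hq : 0 < q) {u v : E N → ℝ}
    (hu : memA N s q Ω u) (hv : memA N s q Ω v) (hu0 : ∀ x, 0 ≤ u x) (hv0 : ∀ x, 0 ≤ v x) :
    EF N s q α Ω (qmean u v) + α / q * ∫ x in Ω, defect q (u x) (v x) ≤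
      (EF N s q α Ω u + EF N s q α Ω v) / 2 := by
  have h := gagSq_qmean_toReal_le hu hv
  have e : ∫ x in Ω, defect q (u x) (v x) = (∫ x in Ω, |qmean u v x| ^ q)
      - 1 / 2 * (∫ x in Ω, |u x| ^ q) - 1 / 2 * ∫ x in Ω, |v x| ^ q := by
    simp only [defect_eq hu0 hv0]
    have i0 : IntegrableOn (fun x => |qmean u v x| ^ q) Ω := (memA_qmean hq hu hv).2.2.2
    have i1 : IntegrableOn (fun x => 1 / 2 * |u x| ^ q) Ω := hu.2.2.2.const_mul _
    have i2 : IntegrableOn (fun x => 1 / 2 * |v x| ^ q) Ω := hv.2.2.2.const_mul _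
    rw [integral_sub (f := fun x => |qmean u v x| ^ q - 1 / 2 * |u x| ^ q) (i0.sub i1) i2,
      integral_sub i0 i1,
      integral_const_mul, integral_const_mul]
  simp only [EF]
  rw [e]
  linarith

/-! ### Coercivity and lower semicontinuity -/

/-- Fractional Poincaré inequality: for `x ∈ Ω`, only the interaction of `x` with a ball disjoint
from the bounded set `Ω` is kept. -/
lemma poincare {N : ℕ} (hN : 1 ≤ N) {Ω : Set (E N)} (hΩo : IsOpen Ω)
    (hΩb : Bornology.IsBounded Ω) {s : ℝ} (hs : 0 < s) :
    ∃ c : ℝ, 0 < c ∧ ∀ u : E N → ℝ, Measurable u → (∀ᵐ x : E N, x ∉ Ω → u x = 0) →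
      ∫⁻ x in Ω, ENNReal.ofReal (c * u x ^ 2) ≤ gagSq N s u := by
  obtain ⟨R, hR, hΩR⟩ := hΩb.subset_ball_lt 0 0
  have : Nonempty (Fin N) := ⟨⟨0, hN⟩⟩
  obtain ⟨e, he⟩ := exists_norm_eq (E N) (by positivity : 0 ≤ 2 * R)
  set B := Metric.ball e R with hB
  have hp : 0 < (N : ℝ) + 2 * s := by positivity
  set K : ℝ := (4 * R) ^ ((N : ℝ) + 2 * s) with hK
  have hKpos : 0 < K := by positivity
  have hV : 0 < (volume B).toReal :=
    ENNReal.toReal_pos (Metric.measure_ball_pos volume e hR).ne' measure_ball_lt_top.ne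
  refine ⟨(volume B).toReal / K, by positivity, fun u hu hu0 => ?_⟩
  unfold gagSq
  refine le_trans ?_ (setLIntegral_le_lintegral Ω _)
  refine setLIntegral_mono' hΩo.measurableSet fun x hx => ?_
  refine le_trans ?_ (setLIntegral_le_lintegral B _)
  have h1 : ∫⁻ y in B, ENNReal.ofReal (u x ^ 2 / K) ≤
      ∫⁻ y in B, ENNReal.ofReal ((u x - u y) ^ 2 / dist x y ^ ((N : ℝ) + 2 * s)) := by
    refine lintegral_mono_ae ?_
    refine (ae_restrict_iff' measurableSet_ball).2 ?_
    filter_upwards [hu0] with y hy hyB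
    have hx' : ‖x‖ < R := by simpa using hΩR hx
    have hye : dist y e < R := hyB
    have hyΩ : y ∉ Ω := fun h => by
      have h1 : ‖y‖ < R := by simpa using hΩR h
      have h2 : ‖e‖ ≤ ‖y‖ + dist y e := by
        rw [dist_eq_norm, ← norm_sub_rev e y]
        calc ‖e‖ = ‖y + (e - y)‖ := by congr 1; abel
          _ ≤ _ := norm_add_le _ _
      linarith
    have hxy : dist x y ≤ 4 * R := by
      have h1 := dist_triangle x 0 y
      have h2 := dist_triangle (0 : E N) e y
      simp only [dist_zero_right, dist_zero_left] at h1 h2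
      rw [dist_comm e y] at h2
      linarith
    have hne : 0 < dist x y := dist_pos.2 fun h => hyΩ (h ▸ hx)
    rw [hy hyΩ, sub_zero]
    apply ENNReal.ofReal_le_ofReal
    exact div_le_div_of_nonneg_left (sq_nonneg _) (Real.rpow_pos_of_pos hne _)
      (Real.rpow_le_rpow hne.le hxy hp.le)
  refine le_trans (le_of_eq ?_) h1
  rw [setLIntegral_const, div_mul_eq_mul_div, mul_div_assoc,
    ENNReal.ofReal_mul hV.le, ENNReal.ofReal_toReal measure_ball_lt_top.ne, mul_comm]

/-- Coercivity: since `q < 2`, the quadratic part dominates the `L^q` term. -/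
lemma coercive {N : ℕ} (hN : 1 ≤ N) {Ω : Set (E N)} (hΩo : IsOpen Ω)
    (hΩb : Bornology.IsBounded Ω) {s q α : ℝ} (hs : 0 < s) (hq : q ∈ Set.Ioo (1:ℝ) 2)
    (hα : 0 < α) :
    ∃ C : ℝ, ∀ u : E N → ℝ, memA N s q Ω u →
      α / q * (∫ x in Ω, |u x| ^ q) - C ≤ EF N s q α Ω u := by
  have hq0 : 0 < q := by linarith [hq.1]
  obtain ⟨c, hc, hP⟩ := poincare hN hΩo hΩb hs
  obtain ⟨C, hC, hY⟩ := rpow_le_sq_add hq (by positivity : 0 < 4 * (α / q)) hc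
  have hvol : volume Ω ≠ ∞ := hΩb.measure_lt_top.ne
  refine ⟨C * (volume Ω).toReal / 2, fun u hu => ?_⟩
  have h1 : ∫⁻ x in Ω, ENNReal.ofReal (4 * (α / q) * |u x| ^ q) ≤
      gagSq N s u + ENNReal.ofReal C * volume Ω := by
    refine le_trans ?_ (add_le_add_left (hP u hu.1 hu.2.1) _)
    rw [← setLIntegral_const, ← lintegral_add_right _ measurable_const]
    refine lintegral_mono fun x => ?_
    rw [← ENNReal.ofReal_add (by positivity) hC]
    exact ENNReal.ofReal_le_ofReal (hY _)
  have hCv : ENNReal.ofReal C * volume Ω ≠ ∞ := ENNReal.mul_ne_top ENNReal.ofReal_ne_top hvol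
  have h2 := ENNReal.toReal_mono (ENNReal.add_ne_top.2 ⟨hu.2.2.1.ne, hCv⟩) h1
  rw [ENNReal.toReal_add hu.2.2.1.ne hCv, ENNReal.toReal_mul, ENNReal.toReal_ofReal hC,
    ← integral_eq_lintegral_of_nonneg_ae (ae_of_all _ fun x => by positivity)
      (hu.2.2.2.const_mul _).aestronglyMeasurable, integral_const_mul] at h2
  simp only [EF]
  linarith

/-- Fatou's lemma for the Gagliardo seminorm. -/
lemma gagSq_le_liminf {N : ℕ} (s : ℝ) {u : ℕ → E N → ℝ} {φ : E N → ℝ}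
    (hu : ∀ n, Measurable (u n))
    (h : ∀ᵐ x, Tendsto (fun n => u n x) atTop (nhds (φ x))) :
    gagSq N s φ ≤ liminf (fun n => gagSq N s (u n)) atTop := by
  unfold gagSq
  refine le_trans (lintegral_mono_ae ?_)
    (lintegral_liminf_le fun n => measurable_gag_inner s (hu n))
  filter_upwards [h] with x hx
  refine le_trans (lintegral_mono_ae ?_)
    (lintegral_liminf_le fun n => measurable_gag_right s (hu n) x)
  filter_upwards [h] with y hy
  have : Tendsto (fun n => ENNReal.ofReal
      ((u n x - u n y) ^ 2 / dist x y ^ ((N : ℝ) + 2 * s))) atTop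
      (nhds (ENNReal.ofReal ((φ x - φ y) ^ 2 / dist x y ^ ((N : ℝ) + 2 * s)))) :=
    (ENNReal.continuous_ofReal.tendsto _).comp (((hx.sub hy).pow 2).div_const _)
  exact this.liminf_eq.ge

/-! ### Passage to the limit -/

/-- Completeness of `L^q(Ω)` for `q`-th powers of real functions: a sequence that is Cauchy in
the sense of `∫_Ω |u_n - u_m| ^ q` has an `L^q` limit, reached a.e. along a subsequence, and the
`q`-th moments converge. The limit is extended by zero outside `Ω`. -/
lemma exists_limit {N : ℕ} {Ω : Set (E N)} (hΩ : MeasurableSet Ω) {q : ℝ} (hq : 1 ≤ q)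
    {u : ℕ → E N → ℝ} (hum : ∀ n, Measurable (u n))
    (hui : ∀ n, IntegrableOn (fun x => |u n x| ^ q) Ω)
    (hC : ∀ η : ℝ, 0 < η → ∃ n₀, ∀ n ≥ n₀, ∀ m ≥ n₀, ∫ x in Ω, |u n x - u m x| ^ q < η) :
    ∃ (φ : E N → ℝ) (ns : ℕ → ℕ), Measurable φ ∧ (∀ x, x ∉ Ω → φ x = 0) ∧
      IntegrableOn (fun x => |φ x| ^ q) Ω ∧ StrictMono ns ∧
      (∀ᵐ x ∂(volume.restrict Ω), Tendsto (fun i => u (ns i) x) atTop (nhds (φ x))) ∧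
      Tendsto (fun n => ∫ x in Ω, |u n x| ^ q) atTop (nhds (∫ x in Ω, |φ x| ^ q)) := by
  have hq0 : 0 < q := by linarith
  set p : ℝ≥0∞ := ENNReal.ofReal q with hp
  have hpr : p.toReal = q := ENNReal.toReal_ofReal hq0.le
  have hp0 : p ≠ 0 := by simpa [hp] using hq0
  have hpt : p ≠ ∞ := ENNReal.ofReal_ne_top
  have : Fact (1 ≤ p) := ⟨by simpa [hp] using hq⟩
  have hmem : ∀ n, MemLp (u n) p (volume.restrict Ω) := fun n => by
    rw [← integrable_norm_rpow_iff (hum n).aestronglyMeasurable hp0 hpt, hpr]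
    exact hui n
  have hnorm : ∀ g : E N → ℝ, ∀ hg : MemLp g p (volume.restrict Ω),
      ‖hg.toLp g‖ = (∫ x in Ω, |g x| ^ q) ^ q⁻¹ := fun g hg => by
    rw [Lp.norm_toLp, hg.eLpNorm_eq_integral_rpow_norm hp0 hpt, hpr, ENNReal.toReal_ofReal]
    · rfl
    · exact Real.rpow_nonneg (integral_nonneg fun x => by positivity) _
  have hnormq : ∀ g : E N → ℝ, ∀ hg : MemLp g p (volume.restrict Ω),
      ‖hg.toLp g‖ ^ q = ∫ x in Ω, |g x| ^ q := fun g hg => by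
    rw [hnorm, Real.rpow_inv_rpow (integral_nonneg fun x => by positivity) hq0.ne']
  have hcau : CauchySeq fun n => (hmem n).toLp (u n) := by
    refine Metric.cauchySeq_iff.2 fun η hη => ?_
    obtain ⟨n₀, h⟩ := hC (η ^ q) (by positivity)
    refine ⟨n₀, fun n hn m hm => ?_⟩
    rw [dist_eq_norm, ← MemLp.toLp_sub, ← Real.rpow_lt_rpow_iff (norm_nonneg _) hη.le hq0, hnormq]
    exact h n hn m hm
  obtain ⟨f, hf⟩ := cauchySeq_tendsto_of_complete hcau
  obtain ⟨ns, hns, hae⟩ := (tendstoInMeasure_of_tendsto_Lp hf).exists_seq_tendsto_ae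
  have hfm : Measurable (f : E N → ℝ) := (Lp.stronglyMeasurable f).measurable
  have hφ : ∀ᵐ x ∂(volume.restrict Ω), Ω.indicator (f : E N → ℝ) x = f x :=
    indicator_ae_eq_restrict hΩ
  have hint : ∀ᵐ x ∂(volume.restrict Ω),
      |Ω.indicator (f : E N → ℝ) x| ^ q = |f x| ^ q := by
    filter_upwards [hφ] with x hx
    rw [hx]
  have hfi : IntegrableOn (fun x => |f x| ^ q) Ω := by
    have := (integrable_norm_rpow_iff hfm.aestronglyMeasurable hp0 hpt).2 (Lp.memLp f)
    rw [hpr] at this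
    exact this
  refine ⟨Ω.indicator f, ns, hfm.indicator hΩ, fun x hx => Set.indicator_of_notMem hx _,
    hfi.congr (by filter_upwards [hint] with x hx using hx.symm), hns, ?_, ?_⟩
  · have hall : ∀ᵐ x ∂(volume.restrict Ω), ∀ n, (hmem n).toLp (u n) x = u n x :=
      ae_all_iff.2 fun n => (hmem n).coeFn_toLp
    filter_upwards [hφ, hae, hall] with x h1 h2 h3
    rw [h1]
    simpa only [h3] using h2
  · have h1 : Tendsto (fun n => ‖(hmem n).toLp (u n)‖ ^ q) atTop (nhds (‖f‖ ^ q)) :=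
      hf.norm.rpow_const (Or.inr hq0.le)
    simp only [hnormq] at h1
    have h2 := hnormq f (Lp.memLp f)
    rw [Lp.toLp_coeFn] at h2
    rwa [integral_congr_ae hint, ← h2]

lemma memA_zero {N : ℕ} {s q : ℝ} {Ω : Set (E N)} (hq : 0 < q) :
    memA N s q Ω (fun _ => 0) := by
  refine ⟨measurable_const, ae_of_all _ fun _ _ => rfl, by simp [gagSq], ?_⟩
  simp [Real.zero_rpow hq.ne']

/-- The energy functional attains its infimum on `A`. -/
theorem exists_minimizer (N : ℕ) (hN : 1 ≤ N) (Ω : Set (E N)) (hΩo : IsOpen Ω)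
    (hΩb : Bornology.IsBounded Ω) (hΩn : Ω.Nonempty)
    (s q α : ℝ) (hs : s ∈ Set.Ioo (0:ℝ) 1) (hq : q ∈ Set.Ioo (1:ℝ) 2) (hα : 0 < α) :
    ∃ φ : E N → ℝ, memA N s q Ω φ ∧
      (∀ u : E N → ℝ, memA N s q Ω u → EF N s q α Ω φ ≤ EF N s q α Ω u) ∧
      EF N s q α Ω φ = Lam1 N s q α Ω := by
  have hq0 : 0 < q := by linarith [hq.1]
  have hαq : 0 < α / q := by positivity
  obtain ⟨C, hC⟩ := coercive hN hΩo hΩb hs.1 hq hα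
  have hbdd : BddBelow {c : ℝ | ∃ u, memA N s q Ω u ∧ EF N s q α Ω u = c} := by
    refine ⟨-C, ?_⟩
    rintro _ ⟨u, hu, rfl⟩
    have h1 := hC u hu
    have h2 : 0 ≤ α / q * ∫ x in Ω, |u x| ^ q :=
      mul_nonneg hαq.le (integral_nonneg fun x => by positivity)
    linarith
  have hne : {c : ℝ | ∃ u, memA N s q Ω u ∧ EF N s q α Ω u = c}.Nonempty :=
    ⟨_, _, memA_zero hq0, rfl⟩
  set L := Lam1 N s q α Ω with hL
  have hLle : ∀ u, memA N s q Ω u → L ≤ EF N s q α Ω u := fun u hu =>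
    csInf_le hbdd ⟨u, hu, rfl⟩
  have hseq : ∀ n : ℕ, ∃ u, memA N s q Ω u ∧ (∀ x, 0 ≤ u x) ∧
      EF N s q α Ω u < L + 1 / ((n : ℝ) + 1) := fun n => by
    obtain ⟨_, ⟨u, hu, rfl⟩, hlt⟩ := exists_lt_of_csInf_lt hne
      (show sInf _ < L + 1 / ((n : ℝ) + 1) from lt_add_of_pos_right L (by positivity))
    exact ⟨qmean u u, memA_qmean hq0 hu hu, fun x => Real.sqrt_nonneg _,
      (EF_qmean_self_le hu).trans_lt hlt⟩
  choose u huA hu0 huE using hseq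
  have hEtend : Tendsto (fun n => EF N s q α Ω (u n)) atTop (nhds L) := by
    have h1 : Tendsto (fun n : ℕ => L + 1 / ((n : ℝ) + 1)) atTop (nhds L) := by
      simpa using tendsto_const_nhds (x := L) |>.add tendsto_one_div_add_atTop_nhds_zero_nat
    exact tendsto_of_tendsto_of_tendsto_of_le_of_le tendsto_const_nhds h1
      (fun n => hLle _ (huA n)) fun n => (huE n).le
  obtain ⟨M, hMpos, hM⟩ : ∃ M : ℝ, 0 < M ∧ ∀ n, ∫ x in Ω, |u n x| ^ q ≤ M := by
    refine ⟨max 1 ((L + 1 + C) / (α / q)), by positivity, fun n => le_max_of_le_right ?_⟩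
    rw [le_div_iff₀ hαq]
    have h1 := hC _ (huA n)
    have h2 := huE n
    have h3 : 1 / ((n : ℝ) + 1) ≤ 1 := by
      rw [div_le_one (by positivity)]
      linarith [Nat.cast_nonneg (α := ℝ) n]
    linarith
  -- Since the quadratic mean of `u n` and `u m` has energy at least `L`, the gain must be small.
  have hdef : ∀ n m, α / q * ∫ x in Ω, defect q (u n x) (u m x) ≤
      (1 / ((n : ℝ) + 1) + 1 / ((m : ℝ) + 1)) / 2 := fun n m => by
    have h1 := EF_qmean_le (α := α) hq0 (huA n) (huA m) (hu0 n) (hu0 m)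
    have h2 := hLle _ (memA_qmean hq0 (huA n) (huA m))
    linarith [huE n, huE m]
  have hCau : ∀ η : ℝ, 0 < η → ∃ n₀, ∀ n ≥ n₀, ∀ m ≥ n₀,
      ∫ x in Ω, |u n x - u m x| ^ q < η := by
    intro η hη
    obtain ⟨K, hK, hKle⟩ := abs_sub_rpow_le hq (show 0 < η / (4 * M) by positivity)
    obtain ⟨n₀, hn₀⟩ := exists_nat_one_div_lt
      (show 0 < η / (2 * (K + 1)) * (α / q) by positivity)
    refine ⟨n₀, fun n hn m hm => ?_⟩
    have hle : ∀ k : ℕ, k ≥ n₀ → 1 / ((k : ℝ) + 1) < η / (2 * (K + 1)) * (α / q) := fun k hk =>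
      lt_of_le_of_lt (one_div_le_one_div_of_le (by positivity)
        (by have : (n₀ : ℝ) ≤ k := by exact_mod_cast hk
            linarith)) hn₀
    have hD : ∫ x in Ω, defect q (u n x) (u m x) < η / (2 * (K + 1)) := by
      have := hdef n m
      have := hle n hn
      have := hle m hm
      refine lt_of_mul_lt_mul_left (a := α / q) ?_ hαq.le
      linarith
    have i1 : IntegrableOn (fun x => K * defect q (u n x) (u m x)) Ω :=
      (integrableOn_defect hq0 (huA n) (huA m) (hu0 n) (hu0 m)).const_mul _
    have i3 : IntegrableOn (fun x => |u n x| ^ q + |u m x| ^ q) Ω :=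
      (huA n).2.2.2.add (huA m).2.2.2
    have i2 : IntegrableOn (fun x => η / (4 * M) * (|u n x| ^ q + |u m x| ^ q)) Ω :=
      i3.const_mul _
    have hI : ∫ x in Ω, |u n x - u m x| ^ q ≤
        K * (∫ x in Ω, defect q (u n x) (u m x)) +
          η / (4 * M) * ((∫ x in Ω, |u n x| ^ q) + ∫ x in Ω, |u m x| ^ q) := by
      rw [← integral_add (huA n).2.2.2 (huA m).2.2.2, ← integral_const_mul,
        ← integral_const_mul, ← integral_add i1 i2]
      refine integral_mono_of_nonneg (ae_of_all _ fun x => by positivity) (i1.add i2)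
        (ae_of_all _ fun x => ?_)
      have := hKle _ _ (hu0 n x) (hu0 m x)
      simpa only [abs_of_nonneg (hu0 n x), abs_of_nonneg (hu0 m x)] using this
    have h1 : K * (∫ x in Ω, defect q (u n x) (u m x)) ≤ K * (η / (2 * (K + 1))) :=
      mul_le_mul_of_nonneg_left hD.le hK
    have h2 : K * (η / (2 * (K + 1))) < η / 2 := by
      rw [← mul_div_assoc, div_lt_div_iff₀ (by positivity) (by positivity)]
      nlinarith
    have h3 : η / (4 * M) * ((∫ x in Ω, |u n x| ^ q) + ∫ x in Ω, |u m x| ^ q) ≤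
        η / (4 * M) * (M + M) :=
      mul_le_mul_of_nonneg_left (add_le_add (hM n) (hM m)) (by positivity)
    have h4 : η / (4 * M) * (M + M) = η / 2 := by field_simp; ring
    linarith
  obtain ⟨φ, ns, hφm, hφ0, hφi, hns, hφae, hφt⟩ := exists_limit hΩo.measurableSet hq.1.le
    (fun n => (huA n).1) (fun n => (huA n).2.2.2) hCau
  have hae : ∀ᵐ x : E N, Tendsto (fun i => u (ns i) x) atTop (nhds (φ x)) := by
    have h0 : ∀ᵐ x : E N, ∀ i, x ∉ Ω → u (ns i) x = 0 := ae_all_iff.2 fun i => (huA (ns i)).2.1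
    filter_upwards [h0, (ae_restrict_iff' hΩo.measurableSet).1 hφae] with x h1 h2
    by_cases hx : x ∈ Ω
    · exact h2 hx
    · rw [hφ0 x hx]
      simp only [h1 _ hx]
      exact tendsto_const_nhds
  set J := ∫ x in Ω, |φ x| ^ q with hJ
  -- The energies and the `L^q` terms converge, hence so do the seminorms.
  have h2G : Tendsto (fun n => 2 * (EF N s q α Ω (u n) + α / q * ∫ x in Ω, |u n x| ^ q)) atTop
      (nhds (2 * (L + α / q * J))) := (hEtend.add (hφt.const_mul _)).const_mul _
  have hG : Tendsto (fun i => gagSq N s (u (ns i))) atTop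
      (nhds (ENNReal.ofReal (2 * (L + α / q * J)))) := by
    have h2 := (ENNReal.tendsto_ofReal h2G).comp hns.tendsto_atTop
    refine h2.congr fun i => ?_
    simp only [Function.comp, EF]
    rw [← ENNReal.ofReal_toReal (huA (ns i)).2.2.1.ne]
    congr 1
    rw [ENNReal.toReal_ofReal ENNReal.toReal_nonneg]
    ring
  have hGφ : gagSq N s φ ≤ ENNReal.ofReal (2 * (L + α / q * J)) :=
    (gagSq_le_liminf s (fun i => (huA (ns i)).1) hae).trans hG.liminf_eq.le
  have hφA : memA N s q Ω φ :=
    ⟨hφm, ae_of_all _ hφ0, hGφ.trans_lt ENNReal.ofReal_lt_top, hφi⟩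
  have hnn : 0 ≤ 2 * (L + α / q * J) := by
    refine ge_of_tendsto' h2G fun n => ?_
    simp only [EF]
    linarith [ENNReal.toReal_nonneg (a := gagSq N s (u n))]
  have hEφ : EF N s q α Ω φ ≤ L := by
    have h := ENNReal.toReal_mono ENNReal.ofReal_ne_top hGφ
    rw [ENNReal.toReal_ofReal hnn] at h
    simp only [EF, ← hJ]
    linarith
  exact ⟨φ, hφA, fun v hv => hEφ.trans (hLle v hv), le_antisymm hEφ (hLle φ hφA)⟩
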